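/- arXiv:math/9911090 — 3 statements merged into one kernel-verified Lean document; each statement's English description precedes it below -/
import Mathlib

section
/- Wick's theorem holds for conditioned expectations: for any indices i₁,…,i_P ∈ {1,…,n}, almost surely E[∏_{p=1}^P (u_{i_p} − E[u_{i_p}|V]) | V] equals 0 if P is odd, and equals the sum over all pairings {(j₁,j₂),…,(j_{P−1},j_P)} of the P indices of the products Σ^V_{i_{j₁} i_{j₂}} ⋯ Σ^V_{i_{j_{P−1}} i_{j_P}} if P is even, where Σ^V = A⁻¹ − A⁻¹Gᵀ(G A⁻¹ Gᵀ)⁻¹ G A⁻¹ is the conditional covariance matrix. -/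
open MeasureTheory Matrix Real
open scoped ProbabilityTheory

section helpers
open ProbabilityTheory

def wickInv {P : ℕ} (S : Finset (Fin P)) : Finset (Equiv.Perm (Fin P)) :=
  Finset.univ.filter (fun σ => (∀ x, σ (σ x) = x) ∧ ∀ x, σ x ≠ x ↔ x ∈ S)

def wickSum {P : ℕ} (C : Fin P → Fin P → ℝ) (S : Finset (Fin P)) : ℝ :=
  ∑ σ ∈ wickInv S, ∏ x ∈ S.filter (fun x => x < σ x), C x (σ x)

lemma wickInv_step {P : ℕ} (S : Finset (Fin P)) (a q : Fin P) (ha : a ∈ S) (hq : q ∈ S)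
    (haq : q ≠ a) (σ : Equiv.Perm (Fin P)) (hσ : σ ∈ wickInv S) (hσa : σ a = q) :
    Equiv.swap a q * σ ∈ wickInv ((S.erase a).erase q) := by
  simp only [wickInv, Finset.mem_filter, Finset.mem_univ, true_and, Finset.mem_erase,
    Equiv.Perm.mul_apply] at hσ ⊢
  obtain ⟨h1, h2⟩ := hσ
  have hσq : σ q = a := by rw [← hσa, h1]
  have key : ∀ x, x ≠ a → x ≠ q → Equiv.swap a q (σ x) = σ x := by
    intro x hxa hxq
    apply Equiv.swap_apply_of_ne_of_ne
    · intro h; apply hxq; rw [← h1 x, h, hσa]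
    · intro h; apply hxa; rw [← h1 x, h, hσq]
  constructor
  · intro x
    by_cases hxa : x = a
    · subst hxa; simp [hσa]
    by_cases hxq : x = q
    · subst hxq; simp [hσq]
    rw [key x hxa hxq, h1, Equiv.swap_apply_of_ne_of_ne hxa hxq]
  · intro x
    by_cases hxa : x = a
    · subst hxa; simp [hσa]
    by_cases hxq : x = q
    · subst hxq; simp [hσq]
    rw [key x hxa hxq, h2]
    simp [hxa, hxq]

lemma wickInv_step' {P : ℕ} (S : Finset (Fin P)) (a q : Fin P) (ha : a ∈ S) (hq : q ∈ S)
    (haq : q ≠ a) (τ : Equiv.Perm (Fin P)) (hτ : τ ∈ wickInv ((S.erase a).erase q)) :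
    Equiv.swap a q * τ ∈ wickInv S ∧ (Equiv.swap a q * τ) a = q := by
  simp only [wickInv, Finset.mem_filter, Finset.mem_univ, true_and, Finset.mem_erase,
    Equiv.Perm.mul_apply] at hτ ⊢
  obtain ⟨h1, h2⟩ := hτ
  have ha' : τ a = a := by
    by_contra h; exact ((h2 a).1 h).2.1 rfl
  have hq' : τ q = q := by
    by_contra h; exact ((h2 q).1 h).1 rfl
  have key : ∀ x, x ≠ a → x ≠ q → Equiv.swap a q (τ x) = τ x := by
    intro x hxa hxq
    apply Equiv.swap_apply_of_ne_of_ne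
    · intro h; apply hxa; rw [← h1 x, h, ha']
    · intro h; apply hxq; rw [← h1 x, h, hq']
  refine ⟨⟨?_, ?_⟩, ?_⟩
  · intro x
    by_cases hxa : x = a
    · subst hxa; simp [ha', hq']
    by_cases hxq : x = q
    · subst hxq; simp [ha', hq']
    rw [key x hxa hxq, h1, Equiv.swap_apply_of_ne_of_ne hxa hxq]
  · intro x
    by_cases hxa : x = a
    · subst hxa; simp [ha', ha, haq]
    by_cases hxq : x = q
    · subst hxq; simp [hq', hq, haq.symm]
    rw [key x hxa hxq, h2]
    simp [hxa, hxq]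
  · simp [ha']

lemma wickSum_rec {P : ℕ} (C : Fin P → Fin P → ℝ) (S : Finset (Fin P)) (a : Fin P) (ha : a ∈ S)
    (hmin : ∀ x ∈ S, a ≤ x) :
    wickSum C S = ∑ q ∈ S.erase a, C a q * wickSum C ((S.erase a).erase q) := by
  unfold wickSum
  have hmaps : ∀ σ ∈ wickInv S, σ a ∈ S.erase a := by
    intro σ hσ
    simp only [wickInv, Finset.mem_filter, Finset.mem_univ, true_and] at hσ
    rw [Finset.mem_erase]
    refine ⟨(hσ.2 a).2 ha, (hσ.2 _).1 ?_⟩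
    rw [hσ.1]
    exact ((hσ.2 a).2 ha).symm
  rw [← Finset.sum_fiberwise_of_maps_to hmaps]
  refine Finset.sum_congr rfl fun q hq => ?_
  obtain ⟨hqa, hqS⟩ := Finset.mem_erase.1 hq
  rw [Finset.mul_sum]
  refine Finset.sum_bij' (fun σ _ => Equiv.swap a q * σ) (fun τ _ => Equiv.swap a q * τ)
    ?_ ?_ ?_ ?_ ?_
  · intro σ hσ
    rw [Finset.mem_filter] at hσ
    exact wickInv_step S a q ha hqS hqa σ hσ.1 hσ.2
  · intro τ hτ
    rw [Finset.mem_filter]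
    exact wickInv_step' S a q ha hqS hqa τ hτ
  · intro σ _
    rw [← mul_assoc, Equiv.swap_mul_self, one_mul]
  · intro σ _
    rw [← mul_assoc, Equiv.swap_mul_self, one_mul]
  · intro σ hσ
    rw [Finset.mem_filter] at hσ
    obtain ⟨hσ, hσa⟩ := hσ
    simp only [wickInv, Finset.mem_filter, Finset.mem_univ, true_and] at hσ
    obtain ⟨h1, h2⟩ := hσ
    have hσq : σ q = a := by rw [← hσa, h1]
    have key : ∀ x, x ≠ a → x ≠ q → Equiv.swap a q (σ x) = σ x := by
      intro x hxa hxq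
      apply Equiv.swap_apply_of_ne_of_ne
      · intro h; apply hxq; rw [← h1 x, h, hσa]
      · intro h; apply hxa; rw [← h1 x, h, hσq]
    have haq : a < q := lt_of_le_of_ne (hmin q hqS) (Ne.symm hqa)
    have hset : S.filter (fun x => x < σ x) =
        insert a (((S.erase a).erase q).filter (fun x => x < (Equiv.swap a q * σ) x)) := by
      ext x
      simp only [Finset.mem_filter, Finset.mem_insert, Finset.mem_erase]
      rw [Equiv.Perm.mul_apply]
      by_cases hxa : x = a
      · subst hxa; simp [hσa, ha, haq]
      by_cases hxq : x = q
      · subst hxq; simp [hσq, hxa, haq.le]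
      rw [key x hxa hxq]; simp [hxa, hxq]
    rw [hset, Finset.prod_insert (by simp only [Finset.mem_filter, Finset.mem_erase]; tauto), hσa]
    congr 1
    refine Finset.prod_congr rfl fun x hx => ?_
    simp only [Finset.mem_filter, Finset.mem_erase] at hx
    rw [Equiv.Perm.mul_apply, key x hx.1.2.1 hx.1.1]

lemma wickSum_empty {P : ℕ} (C : Fin P → Fin P → ℝ) : wickSum C ∅ = 1 := by
  have : wickInv (∅ : Finset (Fin P)) = {1} := by
    ext σ
    simp only [wickInv, Finset.mem_filter, Finset.mem_univ, true_and, Finset.notMem_empty,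
      iff_false, not_not, Finset.mem_singleton]
    constructor
    · intro h; ext x; simp [h.2 x]
    · rintro rfl; simp
  simp [wickSum, this]

lemma wickSum_unique {P : ℕ} (C : Fin P → Fin P → ℝ) (F : Finset (Fin P) → ℝ) (h0 : F ∅ = 1)
    (hF : ∀ S a, a ∈ S → F S = ∑ q ∈ S.erase a, C a q * F ((S.erase a).erase q)) 
    (S : Finset (Fin P)) : F S = wickSum C S := by
  induction S using Finset.strongInduction with
  | H S ih =>
    rcases S.eq_empty_or_nonempty with rfl | hne
    · rw [h0, wickSum_empty]
    · rw [hF S _ (S.min'_mem hne), wickSum_rec C S _ (S.min'_mem hne) (fun x hx => S.min'_le x hx)]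
      refine Finset.sum_congr rfl fun q hq => ?_
      rw [ih]
      exact lt_of_le_of_lt (Finset.erase_subset _ _) (Finset.erase_ssubset (S.min'_mem hne))

lemma wickSum_odd {P : ℕ} (C : Fin P → Fin P → ℝ) (S : Finset (Fin P)) (h : Odd S.card) :
    wickSum C S = 0 := by
  induction S using Finset.strongInduction with
  | H S ih =>
    rcases S.eq_empty_or_nonempty with rfl | hne
    · simp at h
    · rw [wickSum_rec C S _ (S.min'_mem hne) (fun x hx => S.min'_le x hx)]
      refine Finset.sum_eq_zero fun q hq => ?_
      rw [ih, mul_zero]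
      · exact lt_of_le_of_lt (Finset.erase_subset _ _) (Finset.erase_ssubset (S.min'_mem hne))
      · have h1 := Finset.card_erase_add_one hq
        have h2 := Finset.card_erase_add_one (S.min'_mem hne)
        rw [← h2, ← h1] at h
        grind

lemma wickSum_univ {P : ℕ} (C : Fin P → Fin P → ℝ) :
    wickSum C Finset.univ = if Odd P then 0 else
      ∑ σ ∈ Finset.univ.filter (fun σ : Equiv.Perm (Fin P) => ∀ x, σ (σ x) = x ∧ σ x ≠ x),
        ∏ x ∈ Finset.univ.filter (fun x : Fin P => x < σ x), C x (σ x) := by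
  split_ifs with h
  · exact wickSum_odd C _ (by simpa using h)
  · unfold wickSum wickInv
    congr 1
    ext σ
    simp [forall_and]

lemma gm_integrable (k : ℕ) : Integrable (fun x : ℝ => x ^ k) (gaussianReal 0 1) := by
  have h := (memLp_id_gaussianReal (μ := 0) (v := 1) k).integrable_norm_pow'
  refine (integrable_norm_iff (by fun_prop)).1 ?_
  simpa using h

lemma gm_integrable' (k : ℕ) : Integrable (fun x : ℝ => x ^ k * gaussianPDFReal 0 1 x) := by
  have h := gm_integrable k
  rw [gaussianReal_of_var_ne_zero _ one_ne_zero,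
    integrable_withDensity_iff_integrable_smul' (measurable_gaussianPDF _ _)
      (ae_of_all _ fun _ => gaussianPDF_lt_top)] at h
  simpa [toReal_gaussianPDF, mul_comm] using h

lemma gm_rec (k : ℕ) : ∫ x, x ^ (k + 1) ∂(gaussianReal 0 1) =
    k * ∫ x, x ^ (k - 1) ∂(gaussianReal 0 1) := by
  have hd : ∀ x : ℝ, HasDerivAt (gaussianPDFReal 0 1) (- x * gaussianPDFReal 0 1 x) x := by
    intro x
    have : HasDerivAt (fun x : ℝ => (√(2 * Real.pi * (1:NNReal)))⁻¹ * 
        Real.exp (-(x - 0)^2 / (2 * (1:NNReal)))) (- x * gaussianPDFReal 0 1 x) x := by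
      have h1 : HasDerivAt (fun x : ℝ => -(x - 0)^2 / (2 * (1:NNReal))) (-x) x := by
        have := (((hasDerivAt_id x).sub_const 0).pow 2).neg.div_const (2 * ((1:NNReal):ℝ))
        exact this.congr_deriv (by simp; ring)
      refine (h1.exp.const_mul ((√(2 * Real.pi * (1:NNReal)))⁻¹)).congr_deriv ?_
      unfold gaussianPDFReal; ring
    exact this
  have h := integral_mul_deriv_eq_deriv_mul_of_integrable (u := fun x : ℝ => x ^ k)
    (u' := fun x : ℝ => k * x ^ (k-1)) (v := gaussianPDFReal 0 1)
    (v' := fun x => - x * gaussianPDFReal 0 1 x) (fun x _ => hasDerivAt_pow k x)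
    (fun x _ => hd x) ?_ ?_ (gm_integrable' k)
  · rw [integral_gaussianReal_eq_integral_smul one_ne_zero,
      integral_gaussianReal_eq_integral_smul one_ne_zero, ← integral_const_mul]
    rw [← neg_inj, ← integral_neg] 
    convert h using 1
    · congr 1; ext x; simp; ring
    · congr 2; ext x; simp; ring
  · convert (gm_integrable' (k+1)).neg using 1
    ext x; simp; ring
  · convert (gm_integrable' (k-1)).const_mul k using 1
    ext x; simp; ring

noncomputable abbrev stdG (n : ℕ) : Measure (Fin n → ℝ) := Measure.pi (fun _ => gaussianReal 0 1)

lemma mv_integrable {n : ℕ} (p : MvPolynomial (Fin n) ℝ) :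
    Integrable (fun x => MvPolynomial.eval x p) (stdG n) := by
  induction p using MvPolynomial.induction_on' with
  | monomial s a =>
    simp only [MvPolynomial.eval_monomial]
    refine Integrable.const_mul ?_ a
    simp only [Finsupp.prod_pow]
    exact Integrable.fintype_prod (f := fun i (x:ℝ) => x ^ s i) (fun i => gm_integrable _)
  | add p q hp hq =>
    simp only [map_add]
    exact hp.add hq

noncomputable def mvE {n : ℕ} (p : MvPolynomial (Fin n) ℝ) : ℝ :=
  ∫ x, MvPolynomial.eval x p ∂(stdG n)

lemma mvE_add {n : ℕ} (p q : MvPolynomial (Fin n) ℝ) : mvE (p + q) = mvE p + mvE q := by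
  simp only [mvE, map_add]
  exact integral_add (mv_integrable p) (mv_integrable q)

lemma mvE_C_mul {n : ℕ} (a : ℝ) (p : MvPolynomial (Fin n) ℝ) :
    mvE (MvPolynomial.C a * p) = a * mvE p := by
  simp [mvE, integral_const_mul]

lemma mvE_sum {n : ℕ} {ι : Type*} (s : Finset ι) (p : ι → MvPolynomial (Fin n) ℝ) :
    mvE (∑ i ∈ s, p i) = ∑ i ∈ s, mvE (p i) := by
  simp only [mvE, map_sum]
  exact integral_finsetSum _ (fun i _ => mv_integrable (p i))

lemma mvE_monomial {n : ℕ} (s : Fin n →₀ ℕ) (a : ℝ) :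
    mvE (MvPolynomial.monomial s a) = a * ∏ i, ∫ x, x ^ (s i) ∂(gaussianReal 0 1) := by
  simp only [mvE, MvPolynomial.eval_monomial, integral_const_mul, Finsupp.prod_pow]
  congr 1
  exact integral_fintype_prod_eq_prod (fun i (x:ℝ) => x ^ s i)

lemma mvE_stein {n : ℕ} (j : Fin n) (p : MvPolynomial (Fin n) ℝ) :
    mvE (MvPolynomial.X j * p) = mvE (MvPolynomial.pderiv j p) := by
  induction p using MvPolynomial.induction_on' with
  | monomial s a =>
    rw [MvPolynomial.pderiv_monomial, MvPolynomial.X, MvPolynomial.monomial_mul, mvE_monomial,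
      mvE_monomial, ← Finset.mul_prod_erase _ _ (Finset.mem_univ j),
      ← Finset.mul_prod_erase (a := j) _ _ (Finset.mem_univ j)]
    have : ∏ x ∈ Finset.univ.erase j, ∫ y, y ^ ((Finsupp.single j 1 + s : Fin n →₀ ℕ) x) ∂(gaussianReal 0 1) =
        ∏ x ∈ Finset.univ.erase j, ∫ y, y ^ ((s - Finsupp.single j 1 : Fin n →₀ ℕ) x) ∂(gaussianReal 0 1) := by
      refine Finset.prod_congr rfl fun x hx => ?_
      have hx := (Finset.mem_erase.1 hx).1
      simp [hx.symm]
    rw [this]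
    have h2 := gm_rec (s j)
    simp only [Finsupp.add_apply, Finsupp.single_eq_same, Finsupp.tsub_apply, add_comm 1 (s j)]
    rw [h2]; ring
  | add p q hp hq => rw [mul_add, mvE_add, hp, hq, map_add, mvE_add]

lemma pderiv_prod_aux {n : ℕ} {ι : Type*} [DecidableEq ι] (j : Fin n) (S : Finset ι)
    (f : ι → MvPolynomial (Fin n) ℝ) :
    MvPolynomial.pderiv j (∏ p ∈ S, f p) =
      ∑ q ∈ S, MvPolynomial.pderiv j (f q) * ∏ p ∈ S.erase q, f p := by
  induction S using Finset.induction_on with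
  | empty => simp
  | insert a S ha ih =>
    rw [Finset.prod_insert ha, Derivation.leibniz, ih, Finset.sum_insert ha,
      Finset.erase_insert ha, add_comm, smul_eq_mul, smul_eq_mul, mul_comm, Finset.mul_sum]
    congr 1
    refine Finset.sum_congr rfl fun q hq => ?_
    have hqa : a ≠ q := fun h => ha (h ▸ hq)
    rw [Finset.erase_insert_of_ne hqa, Finset.prod_insert
      (fun h => ha (Finset.mem_of_mem_erase h))]
    ring

noncomputable def linP {n : ℕ} (a : Fin n → ℝ) : MvPolynomial (Fin n) ℝ :=
  ∑ k, MvPolynomial.C (a k) * MvPolynomial.X k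

lemma isserlis_rec {n P : ℕ} (M : Fin P → Fin n → ℝ) (S : Finset (Fin P)) (a : Fin P)
    (ha : a ∈ S) : mvE (∏ p ∈ S, linP (M p)) =
      ∑ q ∈ S.erase a, (∑ k, M a k * M q k) * mvE (∏ p ∈ (S.erase a).erase q, linP (M p)) := by
  rw [← Finset.mul_prod_erase _ _ ha]
  conv_lhs => rw [linP]
  rw [Finset.sum_mul, mvE_sum]
  simp only [mul_assoc, mvE_C_mul, mvE_stein, pderiv_prod_aux, mvE_sum]
  have hp : ∀ k q, MvPolynomial.pderiv k (linP (M q)) = MvPolynomial.C (M q k) := by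
    intro k q
    simp [linP, MvPolynomial.pderiv_X, Pi.single_apply]
  simp only [hp, mvE_C_mul, Finset.mul_sum, Finset.sum_mul]
  rw [Finset.sum_comm]
  simp only [mul_assoc]
lemma stdG_density (n : ℕ) : stdG n = volume.withDensity (fun x =>
    ENNReal.ofReal ((√(2 * π))⁻¹ ^ n * Real.exp (-(1/2) * (x ⬝ᵥ x)))) := by
  have hprod : ∀ x : Fin n → ℝ, (√(2 * π))⁻¹ ^ n * Real.exp (-(1/2) * (x ⬝ᵥ x)) =
      ∏ i, gaussianPDFReal 0 1 (x i) := by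
    intro x
    simp only [gaussianPDFReal, Finset.prod_mul_distrib, ← Real.exp_sum, dotProduct]
    congr 1
    · simp
    · congr 1
      rw [Finset.mul_sum]
      refine Finset.sum_congr rfl fun i _ => ?_
      simp; ring
  simp only [hprod]
  refine Measure.pi_eq fun s hs => ?_
  rw [withDensity_apply _ (MeasurableSet.univ_pi hs)]
  simp only [gaussianReal_apply_eq_integral 0 one_ne_zero]
  rw [volume_pi, Measure.restrict_pi_pi, ← ofReal_integral_eq_lintegral_ofReal,
    integral_fintype_prod_eq_prod (fun i x => gaussianPDFReal 0 1 x), ENNReal.ofReal_prod_of_nonneg]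
  · intro i _
    exact integral_nonneg fun x => gaussianPDFReal_nonneg _ _ _
  · exact Integrable.fintype_prod (f := fun _ => gaussianPDFReal 0 1)
      (fun i => (integrable_gaussianPDFReal 0 1).integrableOn)
  · exact ae_of_all _ fun x => Finset.prod_nonneg fun i _ => gaussianPDFReal_nonneg _ _ _

open scoped MatrixOrder ComplexOrder in
lemma exists_factor {n : ℕ} (A : Matrix (Fin n) (Fin n) ℝ) (hA : A.PosDef) :
    ∃ B : Matrix (Fin n) (Fin n) ℝ, A = Bᵀ * B ∧ IsUnit B.det := by
  obtain ⟨B, hB⟩ := CStarAlgebra.nonneg_iff_eq_star_mul_self.mp hA.posSemidef.nonneg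
  have hB' : A = Bᵀ * B := by
    rw [hB, Matrix.star_eq_conjTranspose, conjTranspose_eq_transpose_of_trivial]
  refine ⟨B, hB', ?_⟩
  have h := hA.det_pos
  rw [hB', det_mul, det_transpose] at h
  exact isUnit_iff_ne_zero.2 fun h0 => by simp [h0] at h

lemma law_std {Ω : Type*} [MeasurableSpace Ω] (μ : Measure Ω) [IsProbabilityMeasure μ]
    {n : ℕ} (A B : Matrix (Fin n) (Fin n) ℝ) (hAB : A = Bᵀ * B) (hB : IsUnit B.det)
    (b m : Fin n → ℝ) (hm : A *ᵥ m = b) (Z : ℝ)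
    (u : Ω → Fin n → ℝ) (hu : Measurable u)
    (hlaw : Measure.map u μ = volume.withDensity (fun s =>
      ENNReal.ofReal (Z * Real.exp (-(1/2) * (s ⬝ᵥ A.mulVec s) + b ⬝ᵥ s)))) :
    Measure.map (fun ω => B *ᵥ (u ω - m)) μ = stdG n := by
  have hφ : Measurable (fun s : Fin n → ℝ => B *ᵥ (s - m)) := by fun_prop
  set c : ℝ := (√(2 * π))⁻¹ ^ n with hc
  have hcpos : 0 < c := by positivity
  set g : (Fin n → ℝ) → ENNReal := fun x => ENNReal.ofReal (c * Real.exp (-(1/2) * (x ⬝ᵥ x)))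
    with hg
  have hgm : Measurable g := by
    apply Measurable.ennreal_ofReal
    simp only [dotProduct]; fun_prop
  set k : ENNReal := ENNReal.ofReal (Z * c⁻¹ * Real.exp ((1/2) * (b ⬝ᵥ m)))
  have hf : ∀ s, ENNReal.ofReal (Z * Real.exp (-(1/2) * (s ⬝ᵥ A.mulVec s) + b ⬝ᵥ s)) =
      k * g (B *ᵥ (s - m)) := by
    intro s
    have hexp : -(1/2) * (s ⬝ᵥ A.mulVec s) + b ⬝ᵥ s = (1/2) * (b ⬝ᵥ m) +
        -(1/2) * ((B *ᵥ (s - m)) ⬝ᵥ (B *ᵥ (s - m))) := by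
      have hsymm : Aᵀ = A := by rw [hAB]; simp
      have h1 : (B *ᵥ (s - m)) ⬝ᵥ (B *ᵥ (s - m)) = (s - m) ⬝ᵥ (A *ᵥ (s - m)) := by
        rw [hAB, ← mulVec_mulVec, dotProduct_mulVec (s - m), vecMul_transpose]
      have h2 : m ⬝ᵥ (A *ᵥ s) = b ⬝ᵥ s := by
        rw [dotProduct_mulVec, ← mulVec_transpose, hsymm, hm]
      rw [h1, mulVec_sub, hm, dotProduct_sub, sub_dotProduct, sub_dotProduct, h2,
        dotProduct_comm m b, dotProduct_comm s b]
      ring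
    rw [hexp, Real.exp_add]
    simp only [k, hg]
    rw [← ENNReal.ofReal_mul' (by positivity)]
    congr 1
    field_simp
  have hvol : Measure.map (fun s : Fin n → ℝ => B *ᵥ (s - m)) volume =
      ENNReal.ofReal (abs (det B)⁻¹) • volume := by
    have h1 := Real.map_matrix_volume_pi_eq_smul_volume_pi hB.ne_zero
    rw [← h1]
    conv_rhs => rw [← (measurePreserving_sub_right (volume : Measure (Fin n → ℝ)) m).map_eq]
    rw [Measure.map_map (by fun_prop) (by fun_prop)]
    rfl
  have hmap : Measure.map (fun ω => B *ᵥ (u ω - m)) μ =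
      Measure.map (fun s : Fin n → ℝ => B *ᵥ (s - m)) (Measure.map u μ) := by
    rw [Measure.map_map hφ hu]; rfl
  have hprop : Measure.map (fun ω => B *ᵥ (u ω - m)) μ =
      (k * ENNReal.ofReal (abs (det B)⁻¹)) • stdG n := by
    rw [hmap, hlaw, stdG_density]
    ext S hS
    rw [Measure.map_apply hφ hS, withDensity_apply _ (hφ hS)]
    simp only [hf]
    have hgφ : Measurable fun s => g (B *ᵥ (s - m)) := hgm.comp hφ
    rw [lintegral_const_mul _ hgφ, ← setLIntegral_map hS hgm hφ, hvol,
      Measure.smul_apply, withDensity_apply _ hS, Measure.restrict_smul, lintegral_smul_measure]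
    simp only [smul_eq_mul, mul_assoc]
    rfl
  have h1 : IsProbabilityMeasure (Measure.map (fun ω => B *ᵥ (u ω - m)) μ) :=
    Measure.isProbabilityMeasure_map (by fun_prop)
  have h2 := h1.measure_univ
  rw [hprop] at h2
  simp at h2
  rw [hprop]
  simp [h2]
lemma eval_linP {n : ℕ} (a x : Fin n → ℝ) : MvPolynomial.eval x (linP a) = ∑ k, a k * x k := by
  simp [linP]

lemma pderiv_linP {n : ℕ} (a : Fin n → ℝ) (k : Fin n) :
    MvPolynomial.pderiv k (linP a) = MvPolynomial.C (a k) := by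
  simp [linP, MvPolynomial.pderiv_X, Pi.single_apply]

lemma mvE_one {n : ℕ} : mvE (1 : MvPolynomial (Fin n) ℝ) = 1 := by
  simp [mvE]

lemma mvE_lin_mul {n : ℕ} (a : Fin n → ℝ) (p : MvPolynomial (Fin n) ℝ) :
    mvE (linP a * p) = ∑ k, a k * mvE (MvPolynomial.pderiv k p) := by
  rw [linP, Finset.sum_mul, mvE_sum]
  simp only [mul_assoc, mvE_C_mul, mvE_stein]

lemma mvE_lin {n : ℕ} (a : Fin n → ℝ) : mvE (linP a) = 0 := by
  have h := mvE_lin_mul a 1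
  rw [mul_one] at h
  rw [h]; simp [mvE]

lemma mvE_lin_lin {n : ℕ} (a b : Fin n → ℝ) : mvE (linP a * linP b) = ∑ k, a k * b k := by
  rw [mvE_lin_mul]
  simp only [pderiv_linP]
  refine Finset.sum_congr rfl fun k _ => ?_
  have := mvE_C_mul (n := n) (b k) 1
  rw [mul_one, mvE_one, mul_one] at this
  rw [this]

lemma isserlis {n P : ℕ} (M : Fin P → Fin n → ℝ) :
    ∫ x, ∏ p, (∑ k, M p k * x k) ∂(stdG n) =
      wickSum (fun p q => ∑ k, M p k * M q k) Finset.univ := by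
  have h := wickSum_unique (fun p q => ∑ k, M p k * M q k)
    (fun S => mvE (∏ p ∈ S, linP (M p))) (by simp [mvE_one])
    (fun S a ha => isserlis_rec M S a ha) Finset.univ
  rw [← h]
  simp only [mvE, map_prod, eval_linP]

lemma stdG_isGaussian (n : ℕ) : IsGaussian (stdG n) := by
  have h := (iIndepFun_pi (μ := fun _ : Fin n => gaussianReal 0 1) (X := fun _ => id)
    (fun _ => aemeasurable_id))
  have h2 : HasGaussianLaw (fun (x : Fin n → ℝ) => (fun i => x i)) (stdG n) := by
    refine iIndepFun.hasGaussianLaw (X := fun i (x : Fin n → ℝ) => x i) (fun i => ?_) h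
    constructor
    rw [(measurePreserving_eval (fun _ : Fin n => gaussianReal 0 1) i).map_eq]
    infer_instance
  have := h2.isGaussian_map
  simpa using this

lemma indep_lin {Ω : Type*} [MeasurableSpace Ω] (μ : Measure Ω) [IsProbabilityMeasure μ]
    {n N M : ℕ} (X : Ω → Fin n → ℝ) (hX : Measurable X) (hlaw : Measure.map X μ = stdG n)
    (T : Matrix (Fin M) (Fin n) ℝ) (R : Matrix (Fin N) (Fin n) ℝ) (hTR : T * Rᵀ = 0) :
    IndepFun (fun ω => T *ᵥ X ω) (fun ω => R *ᵥ X ω) μ := by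
  have hG : HasGaussianLaw X μ := ⟨by rw [hlaw]; exact stdG_isGaussian n⟩
  have hint : ∀ p : MvPolynomial (Fin n) ℝ,
      ∫ ω, MvPolynomial.eval (X ω) p ∂μ = mvE p := by
    intro p
    rw [mvE, ← hlaw, integral_map hX.aemeasurable]
    rw [hlaw]; exact (mv_integrable p).aestronglyMeasurable
  have hjoint : HasGaussianLaw (fun ω => (T *ᵥ X ω, R *ᵥ X ω)) μ :=
    hG.map ((LinearMap.toContinuousLinearMap T.mulVecLin).prod
      (LinearMap.toContinuousLinearMap R.mulVecLin))
  refine HasGaussianLaw.indepFun_of_covariance_eval (X := fun i ω => (T *ᵥ X ω) i)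
    (Y := fun j ω => (R *ᵥ X ω) j) hjoint ?_
  intro i j
  have hi : MemLp (fun ω => (T *ᵥ X ω) i) 2 μ :=
    (HasGaussianLaw.eval (X := fun i ω => (T *ᵥ X ω) i) hjoint.fst i).memLp_two
  have hj : MemLp (fun ω => (R *ᵥ X ω) j) 2 μ :=
    (HasGaussianLaw.eval (X := fun i ω => (R *ᵥ X ω) i) hjoint.snd j).memLp_two
  rw [covariance_eq_sub hi hj]
  have e1 : ∀ ω, (T *ᵥ X ω) i = MvPolynomial.eval (X ω) (linP (T i)) := by
    intro ω; rw [eval_linP]; rfl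
  have e2 : ∀ ω, (R *ᵥ X ω) j = MvPolynomial.eval (X ω) (linP (R j)) := by
    intro ω; rw [eval_linP]; rfl
  have h0 : ∑ k, T i k * R j k = 0 := by
    have := congrFun (congrFun hTR i) j
    simpa [Matrix.mul_apply] using this
  simp only [Pi.mul_apply, e1, e2, ← map_mul, hint, mvE_lin_lin, mvE_lin, h0]
  simp

lemma gram_unit {n N : ℕ} (A : Matrix (Fin n) (Fin n) ℝ) (hA : A.PosDef)
    (G : Matrix (Fin N) (Fin n) ℝ) (hG : G.rank = N) : IsUnit (G * A⁻¹ * Gᵀ).det := by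
  have hli : LinearIndependent ℝ G.row := by
    rw [linearIndependent_iff_card_eq_finrank_span, Set.finrank, ← Matrix.rank_eq_finrank_span_row]
    simp [hG]
  have h := hA.inv.mul_mul_conjTranspose_same (B := G) (Matrix.vecMul_injective_iff.2 hli)
  rw [conjTranspose_eq_transpose_of_trivial] at h
  exact isUnit_iff_ne_zero.2 h.det_pos.ne'

theorem wick_core {Ω : Type*} [mΩ : MeasurableSpace Ω] (μ : Measure Ω) [IsProbabilityMeasure μ]
    {n N P : ℕ} (X : Ω → Fin n → ℝ) (hX : Measurable X) (hlaw : Measure.map X μ = stdG n)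
    (T : Matrix (Fin n) (Fin n) ℝ) (R : Matrix (Fin N) (Fin n) ℝ) (hTR : T * Rᵀ = 0)
    (K : Matrix (Fin n) (Fin N) ℝ) (c : Fin n → ℝ) (d : Fin N → ℝ)
    (u : Ω → Fin n → ℝ) (V : Ω → Fin N → ℝ) (hV : ∀ ω, V ω = d + R *ᵥ X ω)
    (hu : ∀ ω, u ω = c + K *ᵥ V ω + T *ᵥ X ω) (idx : Fin P → Fin n) :
    (μ[(fun ω => ∏ p : Fin P,
        (u ω (idx p) - (μ[(fun ω' => u ω' (idx p)) | MeasurableSpace.comap V inferInstance]) ω)) |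
        MeasurableSpace.comap V inferInstance])
      =ᵐ[μ] fun _ => wickSum (fun p q => (T * Tᵀ) (idx p) (idx q)) Finset.univ := by
  have hVX : V = (fun v => d + v) ∘ (fun ω => R *ᵥ X ω) := funext hV
  have hW : Measurable (fun ω => T *ᵥ X ω) := by fun_prop
  have hVm : Measurable V := by rw [hVX]; fun_prop
  have hle : MeasurableSpace.comap V inferInstance ≤ mΩ := hVm.comap_le
  have hleW : MeasurableSpace.comap (fun ω => T *ᵥ X ω) inferInstance ≤ mΩ := hW.comap_le
  have hind : IndepFun (fun ω => T *ᵥ X ω) V μ := by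
    rw [hVX]
    exact (indep_lin μ X hX hlaw T R hTR).comp (φ := id) measurable_id (by fun_prop)
  have hint : ∀ p : MvPolynomial (Fin n) ℝ, Integrable (fun ω => MvPolynomial.eval (X ω) p) μ := by
    intro p
    have := mv_integrable p
    rw [← hlaw] at this
    exact this.comp_measurable hX
  have hEint : ∀ p : MvPolynomial (Fin n) ℝ,
      ∫ ω, MvPolynomial.eval (X ω) p ∂μ = mvE p := by
    intro p
    rw [mvE, ← hlaw, integral_map hX.aemeasurable]
    rw [hlaw]; exact (mv_integrable p).aestronglyMeasurable
  have e1 : ∀ ω i, (T *ᵥ X ω) i = MvPolynomial.eval (X ω) (linP (T i)) := by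
    intro ω i; rw [eval_linP]; rfl
  have hWint : ∀ i, Integrable (fun ω => (T *ᵥ X ω) i) μ := by
    intro i; simp only [e1]; exact hint _
  have hTm : Measurable[MeasurableSpace.comap (fun ω => T *ᵥ X ω) inferInstance]
      (fun ω => T *ᵥ X ω) := comap_measurable _
  have hcW : ∀ i, μ[(fun ω => (T *ᵥ X ω) i) | MeasurableSpace.comap V inferInstance]
      =ᵐ[μ] fun _ => 0 := by
    intro i
    have h := condExp_indep_eq hleW hle (f := fun ω => (T *ᵥ X ω) i) (μ := μ)
      (((measurable_pi_apply i).comp hTm).stronglyMeasurable) hind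
    have h0 : ∫ ω, (T *ᵥ X ω) i ∂μ = 0 := by simp only [e1, hEint, mvE_lin]
    simpa only [h0] using h
  have hVint : ∀ j, Integrable (fun ω => V ω j) μ := by
    intro j
    have : ∀ ω, V ω j = d j + MvPolynomial.eval (X ω) (linP (R j)) := by
      intro ω; rw [hV, eval_linP]; rfl
    simp only [this]
    exact (integrable_const _).add (hint _)
  have hcond : ∀ i, μ[(fun ω => u ω i) | MeasurableSpace.comap V inferInstance]
      =ᵐ[μ] fun ω => c i + (K *ᵥ V ω) i := by
    intro i
    have hdec : (fun ω => u ω i) = (fun ω => c i + (K *ᵥ V ω) i) + (fun ω => (T *ᵥ X ω) i) := by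
      ext ω; rw [hu]; rfl
    have hfirst : Integrable (fun ω => c i + (K *ᵥ V ω) i) μ := by
      refine (integrable_const _).add ?_
      simp only [mulVec, dotProduct]
      exact integrable_finsetSum _ fun j _ => (hVint j).const_mul _
    have hmeas : StronglyMeasurable[MeasurableSpace.comap V inferInstance]
        (fun ω => c i + (K *ᵥ V ω) i) := by
      have h1 : Measurable (fun v : Fin N → ℝ => c i + (K *ᵥ v) i) := by
        simp only [mulVec, dotProduct]; fun_prop
      exact (h1.comp (comap_measurable V)).stronglyMeasurable
    rw [hdec]
    refine (condExp_add hfirst (hWint i) _).trans ?_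
    rw [condExp_of_stronglyMeasurable hle hmeas hfirst]
    filter_upwards [hcW i] with ω hω
    simp [hω]
  have hprod : (fun ω => ∏ p : Fin P,
        (u ω (idx p) - (μ[(fun ω' => u ω' (idx p)) | MeasurableSpace.comap V inferInstance]) ω))
      =ᵐ[μ] fun ω => ∏ p : Fin P, (T *ᵥ X ω) (idx p) := by
    have hall := ae_all_iff.2 (fun p : Fin P => hcond (idx p))
    filter_upwards [hall] with ω hω
    refine Finset.prod_congr rfl fun p _ => ?_
    rw [hω p, hu]
    simp
  refine (condExp_congr_ae hprod).trans ?_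
  have hfin := condExp_indep_eq hleW hle (f := fun ω => ∏ p : Fin P, (T *ᵥ X ω) (idx p)) (μ := μ)
      (by
        have h1 : Measurable (fun v : Fin n → ℝ => ∏ p : Fin P, v (idx p)) := by fun_prop
        exact (h1.comp hTm).stronglyMeasurable) hind
  refine hfin.trans (Filter.Eventually.of_forall fun _ => ?_)
  have h := isserlis (fun p k => T (idx p) k)
  have h3 : ∫ ω, ∏ p : Fin P, (T *ᵥ X ω) (idx p) ∂μ = mvE (∏ p : Fin P, linP (T (idx p))) := by
    rw [← hEint]
    simp only [map_prod, e1]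
  show ∫ ω, ∏ p : Fin P, (T *ᵥ X ω) (idx p) ∂μ = _
  rw [h3]
  simp only [mvE, map_prod, eval_linP]
  rw [h]
  simp only [Matrix.mul_apply, Matrix.transpose_apply]

end helpers

/-- Wick's theorem for conditioned expectations.  For a nondegenerate
Gaussian vector `u` with density `Z⁻¹ exp(-½(s,As) + b·s)` and collective
variables `V = Gu`, the conditional expectation of the product
`∏_p (u_{i_p} − E[u_{i_p}|V])` given `V` is a.s. `0` when `P` is odd, and the sum
over all pairings (encoded as fixed-point-free involutions `σ` of `Fin P`, the
product being taken over the pairs `{x, σ x}` with `x < σ x`) of products of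
entries of the conditional covariance matrix
`Σ^V = A⁻¹ − A⁻¹Gᵀ(GA⁻¹Gᵀ)⁻¹GA⁻¹` when `P` is even. -/
theorem stmt2 {Ω : Type*} [MeasureSpace Ω] [IsProbabilityMeasure (ℙ : Measure Ω)]
    {n N : ℕ} (hN : 1 ≤ N) (hNn : N < n)
    (A : Matrix (Fin n) (Fin n) ℝ) (hA : A.PosDef)
    (b : Fin n → ℝ)
    (G : Matrix (Fin N) (Fin n) ℝ) (hG : G.rank = N)
    (u : Ω → Fin n → ℝ) (hu : Measurable u)
    (hlaw : Measure.map u ℙ = volume.withDensity (fun s =>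
      ENNReal.ofReal ((∫ t : Fin n → ℝ,
          Real.exp (-(1/2) * (t ⬝ᵥ A.mulVec t) + b ⬝ᵥ t))⁻¹ *
        Real.exp (-(1/2) * (s ⬝ᵥ A.mulVec s) + b ⬝ᵥ s))))
    (P : ℕ) (idx : Fin P → Fin n) :
    (ℙ[(fun ω => ∏ p : Fin P,
        (u ω (idx p) - (ℙ[(fun ω' => u ω' (idx p)) |
            MeasurableSpace.comap (fun ω' => G.mulVec (u ω')) inferInstance]) ω)) |
        MeasurableSpace.comap (fun ω' => G.mulVec (u ω')) inferInstance])
      =ᵐ[ℙ] fun _ =>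
        if Odd P then 0 else
          ∑ σ ∈ Finset.univ.filter
              (fun σ : Equiv.Perm (Fin P) => ∀ x, σ (σ x) = x ∧ σ x ≠ x),
            ∏ x ∈ Finset.univ.filter (fun x : Fin P => x < σ x),
              (A⁻¹ - A⁻¹ * Gᵀ * (G * A⁻¹ * Gᵀ)⁻¹ * G * A⁻¹) (idx x) (idx (σ x)) := by
  have hAu : IsUnit A.det := isUnit_iff_ne_zero.2 hA.det_pos.ne'
  obtain ⟨B, hAB, hB⟩ := exists_factor A hA
  have hS := gram_unit A hA G hG
  have hm : A *ᵥ (A⁻¹ *ᵥ b) = b := by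
    rw [mulVec_mulVec, Matrix.mul_nonsing_inv _ hAu, one_mulVec]
  have hX := law_std (ℙ : Measure Ω) A B hAB hB b (A⁻¹ *ᵥ b) hm _ u hu hlaw
  set m := A⁻¹ *ᵥ b with hmdef
  set K := A⁻¹ * Gᵀ * (G * A⁻¹ * Gᵀ)⁻¹ with hK
  have hBA : B⁻¹ * (B⁻¹)ᵀ = A⁻¹ := by
    rw [hAB, Matrix.mul_inv_rev, Matrix.transpose_nonsing_inv]
  have hKS : K * (G * A⁻¹ * Gᵀ) = A⁻¹ * Gᵀ := by
    rw [hK, Matrix.mul_assoc, Matrix.nonsing_inv_mul _ hS, Matrix.mul_one]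
  have hz : (1 - K * G) * A⁻¹ * Gᵀ = 0 := by
    rw [Matrix.sub_mul, Matrix.sub_mul, Matrix.one_mul, sub_eq_zero, ← hKS]
    simp only [Matrix.mul_assoc]
  have hTR : ((1 - K * G) * B⁻¹) * (G * B⁻¹)ᵀ = 0 := by
    rw [Matrix.transpose_mul, ← Matrix.mul_assoc, Matrix.mul_assoc _ B⁻¹, hBA, hz]
  have hTT : ((1 - K * G) * B⁻¹) * ((1 - K * G) * B⁻¹)ᵀ = A⁻¹ - K * G * A⁻¹ := by
    rw [Matrix.transpose_mul, ← Matrix.mul_assoc, Matrix.mul_assoc _ B⁻¹, hBA,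
      Matrix.transpose_sub, Matrix.transpose_one, Matrix.transpose_mul, Matrix.mul_sub,
      ← Matrix.mul_assoc, hz, Matrix.zero_mul, sub_zero, Matrix.mul_one, Matrix.sub_mul,
      Matrix.one_mul]
  have hBu : ∀ ω, B⁻¹ *ᵥ (B *ᵥ (u ω - m)) = u ω - m := by
    intro ω
    rw [mulVec_mulVec, Matrix.nonsing_inv_mul _ hB, one_mulVec]
  have hV : ∀ ω, G *ᵥ u ω = G *ᵥ m + (G * B⁻¹) *ᵥ (B *ᵥ (u ω - m)) := by
    intro ω
    rw [← mulVec_mulVec, hBu, ← mulVec_add]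
    simp
  have hU : ∀ ω, u ω = (m - K *ᵥ (G *ᵥ m)) + K *ᵥ (G *ᵥ u ω) +
      ((1 - K * G) * B⁻¹) *ᵥ (B *ᵥ (u ω - m)) := by
    intro ω
    rw [← mulVec_mulVec _ (1 - K * G) B⁻¹, hBu, sub_mulVec, one_mulVec, ← mulVec_mulVec _ K G,
      mulVec_sub, mulVec_sub]
    abel
  have key := wick_core (ℙ : Measure Ω) (fun ω => B *ᵥ (u ω - m)) (by fun_prop) hX
    ((1 - K * G) * B⁻¹) (G * B⁻¹) hTR K (m - K *ᵥ (G *ᵥ m)) (G *ᵥ m) u (fun ω => G *ᵥ u ω)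
    hV hU idx
  rw [hTT, wickSum_univ] at key
  exact key
end

section
/- If C is a Hermitian positive-definite n×n complex matrix, G is a complex N×n matrix with G G† = (1/n) I_N, and the rows of G are eigenvector-like for C in the sense that G C = D G for some Hermitian N×N matrix D, then G C G† = (1/n) D, this matrix is positive definite (hence invertible), and the regression matrix satisfies Q = C G† (G C G†)⁻¹ = n G†. -/
open Matrix
open scoped ComplexOrder

/-- If `C` is Hermitian positive definite, `G G† = (1/n) I_N`, and
`G C = D G` with `D` Hermitian, then `G C G† = (1/n) D`, this matrix is positive
definite (hence invertible), and the regression matrix is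
`Q = C G† (G C G†)⁻¹ = n G†`. -/
theorem stmt13 {n N : ℕ} (hN : 1 ≤ N) (hNn : N ≤ n)
    (C : Matrix (Fin n) (Fin n) ℂ) (hC : C.PosDef)
    (G : Matrix (Fin N) (Fin n) ℂ)
    (hG : G * G.conjTranspose = (1 / (n : ℂ)) • (1 : Matrix (Fin N) (Fin N) ℂ))
    (D : Matrix (Fin N) (Fin N) ℂ) (hD : D.IsHermitian)
    (hGC : G * C = D * G) :
    G * C * G.conjTranspose = (1 / (n : ℂ)) • D ∧
    (G * C * G.conjTranspose).PosDef ∧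
    IsUnit (G * C * G.conjTranspose) ∧
    C * G.conjTranspose * (G * C * G.conjTranspose)⁻¹ = (n : ℂ) • G.conjTranspose := by
  have hn : (n : ℂ) ≠ 0 := by
    have : n ≠ 0 := by omega
    exact_mod_cast this
  have h1 : G * C * G.conjTranspose = (1 / (n : ℂ)) • D := by
    rw [hGC, Matrix.mul_assoc, hG, Matrix.mul_smul, Matrix.mul_one]
  have hinj : Function.Injective G.vecMul := by
    intro x y hxy
    have h := congrArg (fun v => (n : ℂ) • (v ᵥ* G.conjTranspose)) hxy
    simpa [Matrix.vecMul_vecMul, hG, Matrix.vecMul_smul, smul_smul, hn] using h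
  have h2 : (G * C * G.conjTranspose).PosDef := hC.mul_mul_conjTranspose_same hinj
  have h3 := h2.isUnit
  refine ⟨h1, h2, h3, ?_⟩
  have h4 : C * G.conjTranspose = G.conjTranspose * D := by
    have h := congrArg Matrix.conjTranspose hGC
    rwa [Matrix.conjTranspose_mul, Matrix.conjTranspose_mul, hC.isHermitian.eq, hD.eq] at h
  have h5 : C * G.conjTranspose = ((n : ℂ) • G.conjTranspose) * (G * C * G.conjTranspose) := by
    rw [h1, h4, Matrix.smul_mul, Matrix.mul_smul, smul_smul, mul_one_div_cancel hn, one_smul]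
  have h6 := (Matrix.isUnit_iff_isUnit_det _).1 h3
  conv_lhs => rw [h5]
  exact Matrix.mul_nonsing_inv_cancel_right _ _ h6
end

section
/- Under the same hypotheses (C Hermitian positive definite, G G† = (1/n) I_N, and G C = D G with D Hermitian), the conditional covariance matrix with Fourier-type kernels reduces to the Galerkin complement: C − C G† (G C G†)⁻¹ G C = (I − n G†G) C, where n G†G is the Galerkin projection onto the row space of G. -/
open Matrix
open scoped ComplexOrder

/-- Under the same hypotheses (`C` Hermitian positive definite,
`G G† = (1/n) I_N`, `G C = D G` with `D` Hermitian), the conditional covariance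
matrix reduces to the Galerkin complement:
`C − C G†(G C G†)⁻¹ G C = (I − n G†G) C`. -/
theorem stmt14 {n N : ℕ} (hN : 1 ≤ N) (hNn : N ≤ n)
    (C : Matrix (Fin n) (Fin n) ℂ) (hC : C.PosDef)
    (G : Matrix (Fin N) (Fin n) ℂ)
    (hG : G * G.conjTranspose = (1 / (n : ℂ)) • (1 : Matrix (Fin N) (Fin N) ℂ))
    (D : Matrix (Fin N) (Fin N) ℂ) (hD : D.IsHermitian)
    (hGC : G * C = D * G) :
    C - C * G.conjTranspose * (G * C * G.conjTranspose)⁻¹ * (G * C)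
      = ((1 : Matrix (Fin n) (Fin n) ℂ) - (n : ℂ) • (G.conjTranspose * G)) * C := by
  have hn : (n : ℂ) ≠ 0 := by
    have : n ≠ 0 := by omega
    exact_mod_cast this
  have hCG : C * G.conjTranspose = G.conjTranspose * D := by
    have h := congrArg Matrix.conjTranspose hGC
    rwa [conjTranspose_mul, conjTranspose_mul, hC.isHermitian.eq, hD.eq] at h
  have hCu : IsUnit C.det := (Matrix.isUnit_iff_isUnit_det C).1 hC.isUnit
  have hDE : D * ((n : ℂ) • (G * C⁻¹ * G.conjTranspose)) = 1 := by
    have : D * (G * C⁻¹ * G.conjTranspose) = (1 / (n : ℂ)) • 1 := by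
      rw [← Matrix.mul_assoc, ← Matrix.mul_assoc, ← hGC, Matrix.mul_assoc G C,
        Matrix.mul_nonsing_inv C hCu, Matrix.mul_one, hG]
    rw [Matrix.mul_smul, this, smul_smul, mul_one_div_cancel hn, one_smul]
  generalize (n : ℂ) • (G * C⁻¹ * G.conjTranspose) = E at hDE
  have hinv : (G * C * G.conjTranspose)⁻¹ = (n : ℂ) • E := by
    apply Matrix.inv_eq_right_inv
    rw [hGC, Matrix.mul_assoc D, hG, Matrix.mul_smul, Matrix.mul_smul, Matrix.mul_one,
      Matrix.smul_mul, hDE, smul_smul, mul_one_div_cancel hn, one_smul]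
  rw [hinv, hCG, Matrix.mul_smul, Matrix.mul_assoc _ D E, hDE, Matrix.mul_one, Matrix.sub_mul,
    Matrix.one_mul, Matrix.smul_mul, Matrix.smul_mul, Matrix.mul_assoc]
end
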